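/- For every η ∈ [0,1] there exists a constant C > 0 such that for every f ∈ L^3_{∞,∞}, M_1(f) ≤ C · M_0(f)^{(1+η)/(2+η)} · M_2(f)^{(1−η)/(2+η)} · M_3(f)^{η/(2+η)}. -/

import Mathlib

open MeasureTheory Filter

noncomputable section

/-- The uniform norm `‖f‖ = sup_{t ∈ ℝ} |f t|` of a function `f : ℝ → ℝ`. -/
def unif (f : ℝ → ℝ) : ℝ := ⨆ t : ℝ, |f t|

/-- `M k f = ‖f⁽ᵏ⁾‖`, the uniform norm of the `k`-th derivative of `f`. -/
def M (k : ℕ) (f : ℝ → ℝ) : ℝ := unif (iteratedDeriv k f)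

/-- The class `L^r_{∞,∞}`: bounded functions `f : ℝ → ℝ` having `r-1` (continuous)
derivatives, with `f⁽ʳ⁻¹⁾` locally absolutely continuous and `f⁽ʳ⁾` essentially bounded;
the last two conditions are equivalent to `f⁽ʳ⁻¹⁾` being Lipschitz. -/
def MemL (r : ℕ) (f : ℝ → ℝ) : Prop :=
  Continuous f ∧ (∃ C : ℝ, ∀ t : ℝ, |f t| ≤ C) ∧ ContDiff ℝ (r - 1 : ℕ) f ∧
    ∃ K : NNReal, LipschitzWith K (iteratedDeriv (r - 1) f)

/-- The Euler perfect spline `φ_r`: the `r`-th `2π`-periodic antiderivative with zero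
mean value of `t ↦ sgn (sin t)`. -/
def eulerPhi : ℕ → ℝ → ℝ
  | 0 => fun t => Real.sign (Real.sin t)
  | (s + 1) => fun t =>
      (∫ x in (0:ℝ)..t, eulerPhi s x) -
        (1 / (2 * Real.pi)) * ∫ x in (0:ℝ)..(2 * Real.pi), ∫ u in (0:ℝ)..x, eulerPhi s u

/-- `φ_{λ,r}(t) = λ^{-r} φ_r (λ t)`. -/
def eulerPhiL (lam : ℝ) (r : ℕ) (t : ℝ) : ℝ := lam ^ (-(r : ℤ)) * eulerPhi r (lam * t)

/-- The basic step function: `0` on `[0,a]`, `1` on `(a, a+b]`, `0` after `a+b`. -/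
def psiBase (a b : ℝ) (t : ℝ) : ℝ := if t ≤ a then 0 else if t ≤ a + b then 1 else 0

/-- `psiBase` continued evenly with respect to the point `a+b+c`. -/
def psiHalf (a b c t : ℝ) : ℝ :=
  if t ≤ a + b + c then psiBase a b t else psiBase a b (2 * (a + b + c) - t)

/-- The Rodov step function `ψ_0(a,b,c)`: equal to `psiBase` on `[0, a+b+c]`, continued
evenly with respect to `a+b+c`, then oddly with respect to `2(a+b+c)`, then
`4(a+b+c)`-periodically. -/
def psiZero (a b c t : ℝ) : ℝ :=
  if (t - 4 * (a + b + c) * ⌊t / (4 * (a + b + c))⌋) ≤ 2 * (a + b + c) then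
    psiHalf a b c (t - 4 * (a + b + c) * ⌊t / (4 * (a + b + c))⌋)
  else
    -psiHalf a b c (4 * (a + b + c) - (t - 4 * (a + b + c) * ⌊t / (4 * (a + b + c))⌋))

/-- `ψ_s(a,b,c)`: the `s`-th periodic antiderivative of `ψ_0(a,b,c)` with zero mean
value over the period `[0, 4(a+b+c)]`. -/
def psi : ℕ → ℝ → ℝ → ℝ → ℝ → ℝ
  | 0 => psiZero
  | (s + 1) => fun a b c t =>
      (∫ x in (0:ℝ)..t, psi s a b c x) -
        (1 / (4 * (a + b + c))) *
          ∫ x in (0:ℝ)..(4 * (a + b + c)), ∫ u in (0:ℝ)..x, psi s a b c u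

/-- The modulus of continuity `ω(D^k, X; δ) = sup {‖f⁽ᵏ⁾‖ : f ∈ X, ‖f‖ ≤ δ}` of the
differentiation operator `D^k` on a class `X`. -/
def omegaMod (k : ℕ) (X : Set (ℝ → ℝ)) (δ : ℝ) : ℝ :=
  sSup {y : ℝ | ∃ f ∈ X, M 0 f ≤ δ ∧ M k f = y}

end

/-!
By the mean value inequality, if `f''` is `η`-Hölder with constant `H` then
`‖f (t + s) - f (t - s) - 2 s f' t‖ ≤ H (2 s) ^ η s ^ 2`, so that
`‖f' t‖ s ≤ ‖f‖ + 2 ^ η / 2 * H s ^ (2 + η)` for every step `s > 0`. Optimising in `s` yields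
`‖f'‖ ≤ 2 ‖f‖ ^ ((1 + η) / (2 + η)) (2 ^ η / 2 * H) ^ (1 / (2 + η))`. Since `f''` is bounded by
`M₂` and is `M₃`-Lipschitz, interpolation allows `H = (2 M₂) ^ (1 - η) M₃ ^ η`; the powers of two
cancel and `C = 2` works for every `η`.
-/

open scoped NNReal

theorem le_two_mul_rpow_mul_rpow_of_forall_mul_le_of_pos {x a b p : ℝ} (ha : 0 < a) (hb : 0 < b)
    (hp : 0 < p) (h : ∀ s, 0 < s → x * s ≤ a + b * s ^ p) :
    x ≤ 2 * a ^ ((p - 1) / p) * b ^ (1 / p) := by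
  set s := (a / b) ^ (1 / p) with hs
  have hs_pos : 0 < s := by positivity
  have hs_pow : b * s ^ p = a := by
    rw [hs, one_div, Real.rpow_inv_rpow (by positivity) hp.ne', mul_div_cancel₀ _ hb.ne']
  have hs_mul : a ^ ((p - 1) / p) * b ^ (1 / p) * s = a := by
    rw [hs, mul_assoc, ← Real.mul_rpow hb.le (by positivity), mul_div_cancel₀ _ hb.ne',
      ← Real.rpow_add ha, ← add_div, sub_add_cancel, div_self hp.ne', Real.rpow_one]
  refine le_of_mul_le_mul_right ?_ hs_pos
  linarith [h s hs_pos]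

theorem le_two_mul_rpow_mul_rpow_of_forall_mul_le {x a b p : ℝ} (ha : 0 ≤ a) (hb : 0 ≤ b)
    (hp : 1 ≤ p) (h : ∀ s, 0 < s → x * s ≤ a + b * s ^ p) :
    x ≤ 2 * a ^ ((p - 1) / p) * b ^ (1 / p) := by
  have hp_pos : 0 < p := by linarith
  have perturbed : ∀ ε > 0, x ≤ 2 * (a + ε) ^ ((p - 1) / p) * (b + ε) ^ (1 / p) := fun ε hε ↦
    le_two_mul_rpow_mul_rpow_of_forall_mul_le_of_pos (by positivity) (by positivity) hp_pos
      fun s hs ↦ (h s hs).trans (by gcongr <;> linarith)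
  have cont : Continuous fun ε : ℝ ↦ 2 * (a + ε) ^ ((p - 1) / p) * (b + ε) ^ (1 / p) := by
    have h₁ : 0 ≤ (p - 1) / p := div_nonneg (by linarith) hp_pos.le
    have h₂ : 0 ≤ 1 / p := by positivity
    fun_prop (disch := assumption)
  have lim := (cont.tendsto 0).mono_left (nhdsWithin_le_nhds (s := Set.Ioi 0))
  simp only [add_zero] at lim
  exact ge_of_tendsto lim (eventually_mem_nhdsWithin.mono perturbed)

theorem holderWith_of_norm_le_of_lipschitzWith {X E : Type*} [PseudoEMetricSpace X]
    [SeminormedAddCommGroup E] {g : X → E} {B L η : ℝ≥0} (hη : η ≤ 1) (hB : ∀ x, ‖g x‖ ≤ B)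
    (hL : LipschitzWith L g) :
    HolderWith ((2 * B) ^ (1 - η : ℝ) * L ^ (η : ℝ)) η g := by
  have h₀ : HolderWith (2 * B) 0 g := fun x y ↦ by
    rw [NNReal.coe_zero, ENNReal.rpow_zero, mul_one, edist_le_coe, ← NNReal.coe_le_coe,
      coe_nndist, two_mul]
    exact (dist_le_norm_add_norm _ _).trans (add_le_add (hB x) (hB y))
  simpa [NNReal.coe_sub hη] using
    h₀.interpolate (holderWith_one.2 hL) (tsub_add_cancel_of_le hη)

section SecondDerivative

variable {E : Type*} [NormedAddCommGroup E] [NormedSpace ℝ E] {f f' f'' : ℝ → E}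

theorem norm_le_mul_of_norm_hasDerivAt_le {c h : ℝ} (hf : ∀ s, HasDerivAt f (f' s) s)
    (hf₀ : f 0 = 0) (hh : 0 ≤ h) (bound : ∀ s ∈ Set.Icc 0 h, ‖f' s‖ ≤ c) : ‖f h‖ ≤ c * h := by
  simpa [hf₀, abs_of_nonneg hh] using
    (convex_Icc 0 h).norm_image_sub_le_of_norm_hasDerivWithin_le
      (fun s _ ↦ (hf s).hasDerivWithinAt) bound (Set.left_mem_Icc.2 hh) (Set.right_mem_Icc.2 hh)

theorem norm_le_mul_sq_of_norm_hasDerivAt_hasDerivAt_le {c h : ℝ}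
    (hf : ∀ s, HasDerivAt f (f' s) s) (hf' : ∀ s, HasDerivAt f' (f'' s) s) (hf₀ : f 0 = 0)
    (hf'₀ : f' 0 = 0) (hh : 0 ≤ h) (bound : ∀ s ∈ Set.Icc 0 h, ‖f'' s‖ ≤ c) :
    ‖f h‖ ≤ c * h ^ 2 := by
  have hc : 0 ≤ c := (norm_nonneg _).trans (bound 0 (Set.left_mem_Icc.2 hh))
  rw [sq, ← mul_assoc]
  refine norm_le_mul_of_norm_hasDerivAt_le hf hf₀ hh fun s hs ↦ ?_
  calc ‖f' s‖ ≤ c * s := norm_le_mul_of_norm_hasDerivAt_le hf' hf'₀ hs.1 fun r hr ↦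
        bound r ⟨hr.1, hr.2.trans hs.2⟩
    _ ≤ c * h := mul_le_mul_of_nonneg_left hs.2 hc

theorem norm_sub_sub_smul_le_of_holderWith {H η : ℝ≥0} (hf : ∀ t, HasDerivAt f (f' t) t)
    (hf' : ∀ t, HasDerivAt f' (f'' t) t) (hH : HolderWith H η f'') (t : ℝ) {s : ℝ} (hs : 0 ≤ s) :
    ‖f (t + s) - f (t - s) - (2 * s) • f' t‖ ≤ H * (2 * s) ^ (η : ℝ) * s ^ 2 := by
  refine norm_le_mul_sq_of_norm_hasDerivAt_hasDerivAt_le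
    (f := fun r ↦ f (t + r) - f (t - r) - (2 * r) • f' t)
    (f' := fun r ↦ f' (t + r) + f' (t - r) - (2 : ℝ) • f' t)
    (f'' := fun r ↦ f'' (t + r) - f'' (t - r)) (fun r ↦ ?_) (fun r ↦ ?_) (by simp)
    (by simp [two_smul]) hs fun r hr ↦ ?_
  · exact ((((hf _).comp_const_add t r).sub ((hf _).comp_const_sub t r)).sub
      (((hasDerivAt_id r).const_mul 2).smul_const (f' t))).congr_deriv (by simp)
  · exact ((((hf' _).comp_const_add t r).add ((hf' _).comp_const_sub t r)).sub_const _).congr_deriv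
      (sub_eq_add_neg _ _).symm
  · have hdist : dist (t + r) (t - r) ≤ 2 * s := by
      rw [Real.dist_eq, show t + r - (t - r) = 2 * r by ring, abs_of_nonneg (by linarith [hr.1])]
      linarith [hr.2]
    simpa only [dist_eq_norm] using hH.dist_le_of_le hdist

theorem norm_deriv_le_of_holderWith {A : ℝ} {H η : ℝ≥0} (hf : ∀ t, HasDerivAt f (f' t) t)
    (hf' : ∀ t, HasDerivAt f' (f'' t) t) (hA : ∀ t, ‖f t‖ ≤ A) (hH : HolderWith H η f'') (t : ℝ) :
    ‖f' t‖ ≤ 2 * A ^ ((1 + η : ℝ) / (2 + η)) * (2 ^ (η : ℝ) / 2 * H) ^ (1 / (2 + η : ℝ)) := by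
  have hA₀ : 0 ≤ A := (norm_nonneg _).trans (hA t)
  have step : ∀ s, 0 < s → ‖f' t‖ * s ≤ A + 2 ^ (η : ℝ) / 2 * H * s ^ (2 + η : ℝ) := fun s hs ↦ by
    have hpow : (2 * s) ^ (η : ℝ) * s ^ 2 = 2 ^ (η : ℝ) * s ^ (2 + η : ℝ) := by
      rw [Real.mul_rpow two_pos.le hs.le, add_comm, Real.rpow_add hs, Real.rpow_two, mul_assoc]
    have htaylor := norm_sub_sub_smul_le_of_holderWith hf hf' hH t hs.le
    have hdiff : ‖f (t + s) - f (t - s)‖ ≤ 2 * A := by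
      linarith [norm_sub_le (f (t + s)) (f (t - s)), hA (t + s), hA (t - s)]
    have hnorm : 2 * s * ‖f' t‖ ≤ 2 * A + H * (2 * s) ^ (η : ℝ) * s ^ 2 := by
      rw [← norm_smul_of_nonneg (by positivity)]
      exact (norm_le_norm_add_norm_sub _ _).trans (add_le_add hdiff htaylor)
    rw [mul_assoc (H : ℝ), hpow] at hnorm
    linarith
  have hexp : (1 + η : ℝ) = 2 + η - 1 := by ring
  rw [hexp]
  exact le_two_mul_rpow_mul_rpow_of_forall_mul_le hA₀ (by positivity)
    (by linarith [η.coe_nonneg]) step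

theorem norm_deriv_le_of_norm_le_of_lipschitzWith {A : ℝ} {B L η : ℝ≥0}
    (hf : ∀ t, HasDerivAt f (f' t) t) (hf' : ∀ t, HasDerivAt f' (f'' t) t) (hη : η ≤ 1)
    (hA : ∀ t, ‖f t‖ ≤ A) (hB : ∀ t, ‖f'' t‖ ≤ B) (hL : LipschitzWith L f'') (t : ℝ) :
    ‖f' t‖ ≤ 2 * A ^ ((1 + η : ℝ) / (2 + η)) * (B : ℝ) ^ ((1 - η : ℝ) / (2 + η)) *
      (L : ℝ) ^ (η / (2 + η) : ℝ) := by
  have hconst : 2 ^ (η : ℝ) / 2 * ((2 * B) ^ (1 - η : ℝ) * L ^ (η : ℝ)) =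
      (B : ℝ) ^ (1 - η : ℝ) * (L : ℝ) ^ (η : ℝ) := by
    rw [Real.mul_rpow two_pos.le B.coe_nonneg, Real.rpow_sub two_pos, Real.rpow_one]
    field_simp
  have key := norm_deriv_le_of_holderWith hf hf' hA
    (holderWith_of_norm_le_of_lipschitzWith hη hB hL) t
  push_cast at key
  rwa [hconst, Real.mul_rpow (by positivity) (by positivity), ← Real.rpow_mul B.coe_nonneg,
    ← Real.rpow_mul L.coe_nonneg, mul_one_div, mul_one_div, ← mul_assoc] at key

theorem norm_deriv_le_of_lipschitzWith_deriv {A : ℝ} {L : ℝ≥0} (hf : ∀ t, HasDerivAt f (f' t) t)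
    (hA : ∀ t, ‖f t‖ ≤ A) (hL : LipschitzWith L f') (t : ℝ) : ‖f' t‖ ≤ 2 * A + L := by
  have htaylor : ‖f (t + 1) - f t - (1 : ℝ) • f' t‖ ≤ L * 1 := by
    refine norm_le_mul_of_norm_hasDerivAt_le (f := fun s ↦ f (t + s) - f t - s • f' t)
      (f' := fun s ↦ f' (t + s) - f' t) (fun s ↦ ?_) (by simp) zero_le_one fun s hs ↦ ?_
    · exact ((((hf _).comp_const_add t s).sub_const (f t)).sub
        ((hasDerivAt_id s).smul_const (f' t))).congr_deriv (by simp)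
    · have hdist : dist (t + s) t ≤ 1 := by simpa [abs_of_nonneg hs.1] using hs.2
      simpa [dist_eq_norm] using hL.dist_le_mul_of_le hdist
  rw [one_smul, mul_one] at htaylor
  linarith [norm_le_norm_add_norm_sub (f (t + 1) - f t) (f' t), norm_sub_le (f (t + 1)) (f t),
    hA (t + 1), hA t]

theorem exists_norm_le_of_lipschitzWith_second_deriv {A : ℝ} {L : ℝ≥0}
    (hf : ∀ t, HasDerivAt f (f' t) t) (hf' : ∀ t, HasDerivAt f' (f'' t) t)
    (hA : ∀ t, ‖f t‖ ≤ A) (hL : LipschitzWith L f'') : ∃ B, ∀ t, ‖f'' t‖ ≤ B :=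
  ⟨_, norm_deriv_le_of_lipschitzWith_deriv hf'
    (norm_deriv_le_of_holderWith hf hf' hA (holderWith_one.2 hL)) hL⟩

end SecondDerivative

theorem lipschitzWith_of_forall_abs_deriv_le {g : ℝ → ℝ} {K L : ℝ≥0} (hg : LipschitzWith K g)
    (hL : ∀ t, |deriv g t| ≤ L) : LipschitzWith L g := by
  refine LipschitzWith.of_dist_le_mul fun x y ↦ ?_
  have hac : AbsolutelyContinuousOnInterval g y x :=
    hg.lipschitzOnWith.absolutelyContinuousOnInterval
  rw [dist_eq_norm, dist_eq_norm, ← hac.integral_deriv_eq_sub]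
  exact intervalIntegral.norm_integral_le_of_norm_le_const fun t _ ↦ hL t

theorem M_nonneg (k : ℕ) (f : ℝ → ℝ) : 0 ≤ M k f :=
  Real.iSup_nonneg fun _ ↦ abs_nonneg _

theorem abs_iteratedDeriv_le_M {k : ℕ} {f : ℝ → ℝ} {C : ℝ}
    (hC : ∀ t, |iteratedDeriv k f t| ≤ C) (t : ℝ) : |iteratedDeriv k f t| ≤ M k f :=
  le_ciSup (f := fun s ↦ |iteratedDeriv k f s|) ⟨C, Set.forall_mem_range.2 hC⟩ t

namespace MemL

variable {r k : ℕ} {f : ℝ → ℝ}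

theorem abs_le_M_zero (hf : MemL r f) (t : ℝ) : |f t| ≤ M 0 f := by
  obtain ⟨C, hC⟩ := hf.2.1
  simpa only [iteratedDeriv_zero] using
    abs_iteratedDeriv_le_M (k := 0) (by simpa only [iteratedDeriv_zero] using hC) t

theorem hasDerivAt_iteratedDeriv (hf : MemL r f) (hk : k < r - 1) (t : ℝ) :
    HasDerivAt (iteratedDeriv k f) (iteratedDeriv (k + 1) f t) t := by
  rw [iteratedDeriv_succ]
  exact (hf.2.2.1.differentiable_iteratedDeriv k (mod_cast hk) t).hasDerivAt

theorem lipschitzWith_iteratedDeriv (hf : MemL (r + 1) f) :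
    LipschitzWith (M (r + 1) f).toNNReal (iteratedDeriv r f) := by
  obtain ⟨K, hK⟩ := hf.2.2.2
  refine lipschitzWith_of_forall_abs_deriv_le hK fun t ↦ ?_
  rw [Real.coe_toNNReal _ (M_nonneg _ _), ← iteratedDeriv_succ]
  refine abs_iteratedDeriv_le_M (C := K) (fun s ↦ ?_) t
  rw [iteratedDeriv_succ]
  exact norm_deriv_le_of_lipschitz hK

end MemL

/-- For every `η ∈ [0,1]` there is a constant `C > 0` such that
`M_1(f) ≤ C · M_0(f)^{(1+η)/(2+η)} · M_2(f)^{(1-η)/(2+η)} · M_3(f)^{η/(2+η)}`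
for all `f ∈ L³_{∞,∞}`. -/
theorem stmt19 (η : ℝ) (hη : η ∈ Set.Icc (0:ℝ) 1) :
    ∃ C : ℝ, 0 < C ∧ ∀ f : ℝ → ℝ, MemL 3 f →
      M 1 f ≤ C * (M 0 f) ^ ((1 + η)/(2 + η)) * (M 2 f) ^ ((1 - η)/(2 + η)) *
        (M 3 f) ^ (η/(2 + η)) := by
  lift η to ℝ≥0 using hη.1
  refine ⟨2, two_pos, fun f hf ↦ ciSup_le fun t ↦ ?_⟩
  have hderiv : ∀ t, HasDerivAt f (iteratedDeriv 1 f t) t := by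
    simpa only [iteratedDeriv_zero] using hf.hasDerivAt_iteratedDeriv (k := 0) (by norm_num)
  have hderiv₂ : ∀ t, HasDerivAt (iteratedDeriv 1 f) (iteratedDeriv 2 f t) t :=
    hf.hasDerivAt_iteratedDeriv (by norm_num)
  have hL : LipschitzWith (M 3 f).toNNReal (iteratedDeriv 2 f) := hf.lipschitzWith_iteratedDeriv
  obtain ⟨_, hbdd⟩ :=
    exists_norm_le_of_lipschitzWith_second_deriv hderiv hderiv₂ hf.abs_le_M_zero hL
  have hB : ∀ t, ‖iteratedDeriv 2 f t‖ ≤ (M 2 f).toNNReal := fun t ↦ by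
    rw [Real.coe_toNNReal _ (M_nonneg _ _)]
    exact abs_iteratedDeriv_le_M hbdd t
  simpa only [Real.norm_eq_abs, Real.coe_toNNReal _ (M_nonneg _ f)] using
    norm_deriv_le_of_norm_le_of_lipschitzWith hderiv hderiv₂ (mod_cast hη.2)
      hf.abs_le_M_zero hB hL t
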